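/- Assume (Σ_n, T, (φ_n)) satisfies property (H*), that there exists an invariant sequence (μ_k) of Borel probability measures (i.e. ℒ*_k(μ_{k+1}) = μ_k for all k ∈ ℕ₀), and that the integers n_k can be chosen so that sup_k t_k < 1. Then the invariant sequence (μ_k) is unique: any two sequences (μ_k), (ν_k) of Borel probability measures with ℒ*_k(μ_{k+1}) = μ_k and ℒ*_k(ν_{k+1}) = ν_k for all k satisfy μ_k = ν_k for all k. -/

import Mathlib

open MeasureTheory Real Filter

namespace NSShift

/-- The ambient sequence space `ℕ^ℕ`. -/
abbrev Seq := ℕ → ℕ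

/-- The shift map `T`. -/
def shift (x : Seq) : Seq := fun i => x (i + 1)

/-- Prepend one symbol to a sequence. -/
def cons (a : ℕ) (x : Seq) : Seq := fun i =>
  match i with
  | 0 => a
  | j + 1 => x j

/-- The non-stationary shift space `Σ_n` determined by alphabets `W` and
transition relations `A` (`A n i j` means `α^n_{ij} = 1`). -/
def Sig (W : ℕ → Set ℕ) (A : ℕ → ℕ → ℕ → Prop) (n : ℕ) : Set Seq :=
  {x | (∀ i, x i ∈ W (n + i)) ∧ ∀ i, A (n + i) (x i) (x (i + 1))}

/-- `x` and `y` agree in their first `k` coordinates (lie in a common `k`-cylinder). -/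
def agrees (x y : Seq) (k : ℕ) : Prop := ∀ i < k, x i = y i

open scoped Classical in
/-- The shift metric `d_r(x,y) = r^{min{i : x_i ≠ y_i}}`. -/
noncomputable def dr (r : ℝ) (x y : Seq) : ℝ :=
  if x = y then 0 else r ^ sInf {i | x i ≠ y i}

/-- `f` is locally `(r,m)`-Hölder continuous with Hölder constant `κ` of index `m` on `S`:
`V_k(f) ≤ κ r^k` for all `k ≥ m`. -/
def HolderOn (S : Set Seq) (r κ : ℝ) (m : ℕ) (f : Seq → ℝ) : Prop :=
  ∀ k, m ≤ k → ∀ x ∈ S, ∀ y ∈ S, agrees x y k → |f x - f y| ≤ κ * r ^ k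

/-- The Birkhoff sum `S_n(φ_k) = Σ_{i=0}^{n-1} φ_{k+i} ∘ T^i`. -/
noncomputable def birkhoff (φ : ℕ → Seq → ℝ) (k n : ℕ) (x : Seq) : ℝ :=
  ∑ i ∈ Finset.range n, φ (k + i) (shift^[i] x)

/-- `log B_m = Σ_{i=1}^{m} κ_{m−i} r^i`. -/
noncomputable def logB (κ : ℕ → ℝ) (r : ℝ) (m : ℕ) : ℝ :=
  ∑ i ∈ Finset.Icc 1 m, κ (m - i) * r ^ i

/-- `B_m = exp Σ_{i=1}^{m} κ_{m−i} r^i`. -/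
noncomputable def Bconst (κ : ℕ → ℝ) (r : ℝ) (m : ℕ) : ℝ := Real.exp (logB κ r m)


open scoped Classical in
/-- The Ruelle operator `ℒ_k(f)(x) = Σ_{Ty=x} e^{φ_k(y)} f(y)`, for `x ∈ Σ_{k+1}`. -/
noncomputable def Ruelle (W : ℕ → Set ℕ) (A : ℕ → ℕ → ℕ → Prop) (φ : ℕ → Seq → ℝ)
    (k : ℕ) (f : Seq → ℝ) (x : Seq) : ℝ :=
  ∑' a : ℕ, if cons a x ∈ Sig W A k then Real.exp (φ k (cons a x)) * f (cons a x) else 0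

/-- The iterated Ruelle operator `ℒ^n_k = ℒ_{k+n-1} ∘ ⋯ ∘ ℒ_k`. -/
noncomputable def RuelleIter (W : ℕ → Set ℕ) (A : ℕ → ℕ → ℕ → Prop) (φ : ℕ → Seq → ℝ)
    (k : ℕ) : ℕ → (Seq → ℝ) → Seq → ℝ
  | 0 => fun f => f
  | n + 1 => fun f => Ruelle W A φ (k + n) (RuelleIter W A φ k n f)

/-- `w` is a `k`-admissible word of length `len`. -/
def Adm (W : ℕ → Set ℕ) (A : ℕ → ℕ → ℕ → Prop) (k : ℕ) (w : ℕ → ℕ) (len : ℕ) : Prop :=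
  (∀ i < len, w i ∈ W (k + i)) ∧ ∀ i, i + 1 < len → A (k + i) (w i) (w (i + 1))

/-- Prepend the first `len` symbols of `w` to the sequence `x` (the inverse branch `τ_w`). -/
def prepend (w : ℕ → ℕ) (len : ℕ) (x : Seq) : Seq := fun i =>
  if i < len then w i else x (i - len)

/-- The Lipschitz constant of `f` on `S` with respect to the distance function `d`,
as the least constant `K ≥ 0` with `|f x − f y| ≤ K d(x,y)` on `S`. -/
noncomputable def LipC (S : Set Seq) (d : Seq → Seq → ℝ) (f : Seq → ℝ) : ℝ :=
  sInf {K : ℝ | 0 ≤ K ∧ ∀ x ∈ S, ∀ y ∈ S, |f x - f y| ≤ K * d x y}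

/-- The Vasershtein (Wasserstein) distance of two Borel measures with respect to the
cost function `d`, as the infimum of `∫ d dm` over couplings `m`. -/
noncomputable def Wass (d : Seq → Seq → ℝ) (μ ν : Measure Seq) : ℝ :=
  sInf {t : ℝ | ∃ m : Measure (Seq × Seq),
    m.map Prod.fst = μ ∧ m.map Prod.snd = ν ∧ t = ∫ p, d p.1 p.2 ∂m}

/-- The dual Ruelle operator `ℒ^*_k` on Borel measures, satisfying
`∫ f d(ℒ^*_k μ) = ∫ ℒ_k(f) dμ`. -/
noncomputable def dualRuelle (W : ℕ → Set ℕ) (A : ℕ → ℕ → ℕ → Prop) (φ : ℕ → Seq → ℝ)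
    (k : ℕ) (μ : Measure Seq) : Measure Seq :=
  Measure.sum fun a : ℕ =>
    (μ.withDensity fun x =>
      ENNReal.ofReal ((Sig W A k).indicator (fun y => Real.exp (φ k y)) (cons a x))).map (cons a)

/-- The iterated dual operator `(ℒ^n_k)^* = ℒ^*_k ∘ ⋯ ∘ ℒ^*_{k+n-1}`. -/
noncomputable def dualRuelleIter (W : ℕ → Set ℕ) (A : ℕ → ℕ → ℕ → Prop) (φ : ℕ → Seq → ℝ) :
    (k : ℕ) → ℕ → Measure Seq → Measure Seq
  | _, 0, μ => μ
  | k, n + 1, μ => dualRuelle W A φ k (dualRuelleIter W A φ (k + 1) n μ)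

/-- A non-stationary shift space `((Σ_n), T, (φ_n))` satisfying property `(H*)`, together
with the choices of the constants `β`, `n_k`, base letters `o_k`, mixing times `m_k`,
connecting words `u(x)` and lower bounds `C_k` used in the coupling construction. -/
structure HstarSystem where
  /-- the alphabets `𝒲¹_n` -/
  W : ℕ → Set ℕ
  /-- the transition matrices: `A n i j` iff `α^n_{ij} = 1` -/
  A : ℕ → ℕ → ℕ → Prop
  /-- the potentials `φ_n : Σ_n → ℝ` -/
  φ : ℕ → Seq → ℝ
  /-- the Hölder parameter -/
  r : ℝ
  /-- the parameter `β ∈ (0,1)` -/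
  β : ℝ
  /-- the Hölder constants `κ_n` of `φ_n` -/
  κ : ℕ → ℝ
  /-- the finite set `ℐ` from the big preimages property -/
  I : Finset ℕ
  /-- the infinite set `𝒦` from the big preimages property -/
  K : Set ℕ
  /-- the base letters `o_k ∈ 𝒲¹_k` -/
  o : ℕ → ℕ
  /-- the integers `n_k` -/
  nseq : ℕ → ℕ
  /-- the mixing times `m_k` -/
  mseq : ℕ → ℕ
  /-- the connecting words `u(x) ∈ 𝒲^{m_k}_k` (as sequences; only the first `m_k`
  symbols are relevant) -/
  u : ℕ → Seq → Seq
  /-- the constants `C_k` -/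
  Cseq : ℕ → ℝ
  hr : 0 < r ∧ r < 1
  hβ : 0 < β ∧ β < 1
  κnonneg : ∀ n, 0 ≤ κ n
  hKinf : K.Infinite
  /-- no zero rows -/
  row : ∀ n, ∀ i ∈ W n, ∃ j ∈ W (n + 1), A n i j
  /-- no zero columns -/
  col : ∀ n, ∀ i ∈ W (n + 1), ∃ j ∈ W n, A n j i
  /-- topological mixing -/
  mixing : ∀ k : ℕ, ∀ a ∈ W k, ∀ b : ℕ, ∃ N : ℕ, ∀ n, N ≤ n → b ∈ W (k + n) →
    ∃ x ∈ Sig W A k, x 0 = a ∧ x n = b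
  /-- big preimages along `𝒦` -/
  bigPre : ∀ n ∈ K, 1 ≤ n → ∀ a ∈ W n, ∃ b ∈ I, (b : ℕ) ∈ W (n - 1) ∧ A (n - 1) b a
  /-- `ℒ_n(1) = 1` -/
  normalized : ∀ k, ∀ x ∈ Sig W A (k + 1), Ruelle W A φ k (fun _ => 1) x = 1
  /-- `φ_n` is locally `(r,2)`-Hölder for `n ∉ 𝒦` -/
  holder2 : ∀ n ∉ K, HolderOn (Sig W A n) r (κ n) 2 (φ n)
  /-- `φ_n` is locally `(r,1)`-Hölder for `n ∈ 𝒦` -/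
  holder1 : ∀ n ∈ K, HolderOn (Sig W A n) r (κ n) 1 (φ n)
  ho : ∀ k, o k ∈ W k
  /-- `n_k ≥ ⌊−log α_k / log r⌋ + 1` where `α_k = B_k/β` -/
  hn : ∀ k, (⌊-Real.log (Bconst κ r k / β) / Real.log r⌋ + 1 : ℤ) ≤ (nseq k : ℤ)
  /-- `m_k ≥ 1`, `k + m_k ∈ 𝒦` -/
  hm_mem : ∀ k, 1 ≤ mseq k ∧ k + mseq k ∈ K
  /-- `(A_k ⋯ A_{k+m_k−2})_{o_k j} ≥ 1` for all `j ∈ ℐ ∩ 𝒲¹_{k+m_k−1}` -/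
  hm_conn : ∀ k, ∀ j ∈ I, (j : ℕ) ∈ W (k + mseq k - 1) →
    ∃ w : ℕ → ℕ, Adm W A k w (mseq k) ∧ w 0 = o k ∧ w (mseq k - 1) = j
  /-- minimality of `m_k` -/
  hm_min : ∀ k n, (1 ≤ n ∧ k + n ∈ K ∧ ∀ j ∈ I, (j : ℕ) ∈ W (k + n - 1) →
      ∃ w : ℕ → ℕ, Adm W A k w n ∧ w 0 = o k ∧ w (n - 1) = j) → mseq k ≤ n
  /-- the connecting word `u(x)` starts at `o_k`, ends in `ℐ`, and
  `x ∈ T^{m_k}([u(x)]_k)` -/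
  hu : ∀ k, ∀ x ∈ Sig W A (k + mseq k), prepend (u k x) (mseq k) x ∈ Sig W A k ∧
    u k x 0 = o k ∧ u k x (mseq k - 1) ∈ I
  hC_pos : ∀ k, 0 < Cseq k
  /-- `C_k` is a lower bound for `e^{S_{m_k} φ_k (τ_{u(x)} x)}` -/
  hC_le : ∀ k, ∀ x ∈ Sig W A (k + mseq k),
    Cseq k ≤ Real.exp (birkhoff φ k (mseq k) (prepend (u k x) (mseq k) x))

namespace HstarSystem

variable (S : HstarSystem)

/-- `α_k := B_k / β`. -/
noncomputable def alphaC (k : ℕ) : ℝ := Bconst S.κ S.r k / S.β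

/-- the metric `d̄_k(x,y) := min{1, α_k d_r(x,y)}`. -/
noncomputable def dbar (k : ℕ) (x y : Seq) : ℝ := min 1 (S.alphaC k * dr S.r x y)

/-- `s_k := 1 − (1 − r^{n_k} α_k) C_{k+n_k}/B_{k+n_k}`. -/
noncomputable def sconst (k : ℕ) : ℝ :=
  1 - (1 - S.r ^ S.nseq k * S.alphaC k) * S.Cseq (k + S.nseq k) / Bconst S.κ S.r (k + S.nseq k)

/-- `t_k := max{β, s_k}`. -/
noncomputable def tconst (k : ℕ) : ℝ := max S.β (S.sconst k)

/-- `l_k := n_k + m_{k+n_k}`. -/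
def lconst (k : ℕ) : ℕ := S.nseq k + S.mseq (k + S.nseq k)

end HstarSystem

section Helpers
open scoped ENNReal Topology

/-- the weight -/
noncomputable def gw (S : HstarSystem) (k : ℕ) (y : Seq) : ℝ≥0∞ :=
  ENNReal.ofReal ((Sig S.W S.A k).indicator (fun y => Real.exp (S.φ k y)) y)

/-- extended nonnegative Ruelle operator -/
noncomputable def LE1 (S : HstarSystem) (k : ℕ) (F : Seq → ℝ≥0∞) (x : Seq) : ℝ≥0∞ :=
  ∑' a : ℕ, gw S k (cons a x) * F (cons a x)

/-- iterates -/
noncomputable def LEn (S : HstarSystem) (k : ℕ) : ℕ → (Seq → ℝ≥0∞) → Seq → ℝ≥0∞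
  | 0 => fun F => F
  | n + 1 => fun F => LE1 S (k + n) (LEn S k n F)

theorem gw_of_mem (S : HstarSystem) {k : ℕ} {y : Seq} (h : y ∈ Sig S.W S.A k) :
    gw S k y = ENNReal.ofReal (Real.exp (S.φ k y)) := by
  simp [gw, h]

theorem gw_of_notMem (S : HstarSystem) {k : ℕ} {y : Seq} (h : y ∉ Sig S.W S.A k) :
    gw S k y = 0 := by
  simp [gw, h]

theorem cons_shift (y : Seq) : cons (y 0) (shift y) = y := by
  funext i; cases i <;> rfl

theorem shift_mem (S : HstarSystem) {k : ℕ} {y : Seq} (h : y ∈ Sig S.W S.A k) :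
    shift y ∈ Sig S.W S.A (k + 1) := by
  refine ⟨fun i => ?_, fun i => ?_⟩
  · have := h.1 (i + 1)
    rwa [show k + (i + 1) = k + 1 + i by omega] at this
  · have := h.2 (i + 1)
    rwa [show k + (i + 1) = k + 1 + i by omega] at this

theorem shift_iter_mem (S : HstarSystem) {k : ℕ} {y : Seq} (h : y ∈ Sig S.W S.A k) (n : ℕ) :
    shift^[n] y ∈ Sig S.W S.A (k + n) := by
  induction n with
  | zero => exact h
  | succ n ih =>
    rw [Function.iterate_succ_apply']
    exact shift_mem S ih

theorem shift_iter_apply (y : Seq) (n i : ℕ) : (shift^[n] y) i = y (i + n) := by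
  induction n generalizing i with
  | zero => rfl
  | succ n ih =>
    rw [Function.iterate_succ_apply']
    show (shift^[n] y) (i + 1) = _
    rw [ih]; congr 1; omega

theorem shift_iter_prepend (w : ℕ → ℕ) (n : ℕ) (x : Seq) : shift^[n] (prepend w n x) = x := by
  funext i
  rw [shift_iter_apply]
  simp [prepend]

theorem cons_mem_of_head (S : HstarSystem) {k : ℕ} {x y : Seq} {a : ℕ}
    (hx : cons a x ∈ Sig S.W S.A k) (hy : y ∈ Sig S.W S.A (k + 1)) (h0 : x 0 = y 0) :
    cons a y ∈ Sig S.W S.A k := by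
  refine ⟨fun i => ?_, fun i => ?_⟩
  · cases i with
    | zero => exact hx.1 0
    | succ i =>
      have := hy.1 i
      rwa [show k + 1 + i = k + (i + 1) by omega] at this
  · cases i with
    | zero =>
      have := hx.2 0
      show S.A (k + 0) a (y 0)
      rw [← h0]; exact this
    | succ i =>
      have := hy.2 i
      rwa [show k + 1 + i = k + (i + 1) by omega] at this

theorem LE1_mono (S : HstarSystem) {k : ℕ} {F G : Seq → ℝ≥0∞}
    (h : ∀ z ∈ Sig S.W S.A k, F z ≤ G z) (x : Seq) : LE1 S k F x ≤ LE1 S k G x := by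
  refine ENNReal.tsum_le_tsum fun a => ?_
  by_cases hz : cons a x ∈ Sig S.W S.A k
  · gcongr; exact h _ hz
  · simp [gw_of_notMem S hz]

theorem LEn_mono (S : HstarSystem) {k : ℕ} {F G : Seq → ℝ≥0∞}
    (h : ∀ z ∈ Sig S.W S.A k, F z ≤ G z) (n : ℕ) :
    ∀ x ∈ Sig S.W S.A (k + n), LEn S k n F x ≤ LEn S k n G x := by
  induction n with
  | zero => exact h
  | succ n ih => intro x _; exact LE1_mono S ih x

theorem LEn_add (S : HstarSystem) (k : ℕ) (F G : Seq → ℝ≥0∞) (n : ℕ) :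
    LEn S k n (fun z => F z + G z) = fun x => LEn S k n F x + LEn S k n G x := by
  induction n with
  | zero => rfl
  | succ n ih =>
    funext x
    show LE1 S (k + n) (LEn S k n (fun z => F z + G z)) x = LE1 S (k + n) _ x + LE1 S (k + n) _ x
    rw [ih]
    simp only [LE1, mul_add]
    exact ENNReal.tsum_add

theorem LE1_one (S : HstarSystem) (k : ℕ) {x : Seq} (hx : x ∈ Sig S.W S.A (k + 1)) :
    ∑' a : ℕ, gw S k (cons a x) = 1 := by
  have h := S.normalized k x hx
  unfold Ruelle at h
  have hs : Summable (fun a : ℕ => (Sig S.W S.A k).indicator (fun y => Real.exp (S.φ k y)) (cons a x)) := by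
    by_contra hc
    have : (∑' a : ℕ, (Sig S.W S.A k).indicator (fun y => Real.exp (S.φ k y)) (cons a x)) = 1 := by
      rw [← h]; congr 1; funext a; simp [Set.indicator]
    rw [tsum_eq_zero_of_not_summable hc] at this
    norm_num at this
  unfold gw
  rw [← ENNReal.ofReal_tsum_of_nonneg _ hs, ← ENNReal.ofReal_one, ← h]
  · congr 2; funext a; simp [Set.indicator]
  · intro a; exact Set.indicator_nonneg (fun _ _ => (Real.exp_pos _).le) _

theorem LEn_const (S : HstarSystem) (k : ℕ) (c : ℝ≥0∞) (n : ℕ) :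
    ∀ x ∈ Sig S.W S.A (k + n), LEn S k n (fun _ => c) x = c := by
  induction n with
  | zero => intro x _; rfl
  | succ n ih =>
    intro x hx
    have h1 : LE1 S (k + n) (fun _ => c) x = c := by
      unfold LE1
      rw [ENNReal.tsum_mul_right, LE1_one S (k + n) hx, one_mul]
    refine le_antisymm ?_ ?_
    · refine (LE1_mono S (G := fun _ => c) (fun z hz => (ih z hz).le) x).trans h1.le
    · refine h1.ge.trans (LE1_mono S (F := fun _ => c) (fun z hz => (ih z hz).ge) x)

theorem LEn_lower (S : HstarSystem) (k : ℕ) (F : Seq → ℝ≥0∞) {z : Seq}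
    (hz : z ∈ Sig S.W S.A k) (n : ℕ) :
    ENNReal.ofReal (Real.exp (birkhoff S.φ k n z)) * F z ≤ LEn S k n F (shift^[n] z) := by
  induction n with
  | zero => simp [birkhoff, LEn]
  | succ n ih =>
    show _ ≤ LE1 S (k + n) (LEn S k n F) _
    have hm := shift_iter_mem S hz n
    rw [Function.iterate_succ_apply']
    refine le_trans ?_ (ENNReal.le_tsum ((shift^[n] z) 0))
    rw [cons_shift, gw_of_mem S hm]
    have : birkhoff S.φ k (n + 1) z = S.φ (k + n) (shift^[n] z) + birkhoff S.φ k n z := by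
      unfold birkhoff; rw [Finset.sum_range_succ, add_comm]
    rw [this, Real.exp_add, ENNReal.ofReal_mul (Real.exp_pos _).le, mul_assoc]
    gcongr

theorem logB_succ (κ : ℕ → ℝ) (r : ℝ) (m : ℕ) :
    logB κ r (m + 1) = r * (logB κ r m + κ m) := by
  have key : ∀ m, logB κ r m = ∑ i ∈ Finset.range m, κ (m - (1 + i)) * r ^ (1 + i) := by
    intro m
    unfold logB
    rw [show Finset.Icc 1 m = Finset.Ico 1 (m + 1) by ext; simp,
      Finset.sum_Ico_eq_sum_range]
    simp
  rw [key, key, Finset.sum_range_succ', mul_add, Finset.mul_sum]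
  congr 1
  · refine Finset.sum_congr rfl fun i _ => ?_
    rw [show m + 1 - (1 + (i + 1)) = m - (1 + i) by omega]
    ring
  · simp [mul_comm]

theorem logB_nonneg (S : HstarSystem) (m : ℕ) : 0 ≤ logB S.κ S.r m := by
  unfold logB
  exact Finset.sum_nonneg fun i _ => mul_nonneg (S.κnonneg _) (pow_nonneg S.hr.1.le _)

theorem holder_two (S : HstarSystem) (n : ℕ) :
    HolderOn (Sig S.W S.A n) S.r (S.κ n) 2 (S.φ n) := by
  by_cases h : n ∈ S.K
  · exact fun k hk => S.holder1 n h k (by omega)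
  · exact S.holder2 n h

theorem agrees_cons {x y : Seq} {p : ℕ} (h : agrees x y p) (a : ℕ) :
    agrees (cons a x) (cons a y) (p + 1) := by
  intro i hi
  cases i with
  | zero => rfl
  | succ i => exact h i (by omega)

theorem distortion (S : HstarSystem) (k n : ℕ) : ∀ (p : ℕ), 1 ≤ p → ∀ (F G : Seq → ℝ≥0∞),
    (∀ z ∈ Sig S.W S.A k, ∀ z' ∈ Sig S.W S.A k, agrees z z' (p + n) → F z ≤ G z') →
    ∀ x ∈ Sig S.W S.A (k + n), ∀ y ∈ Sig S.W S.A (k + n), agrees x y p →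
    LEn S k n F x ≤ ENNReal.ofReal (Real.exp (logB S.κ S.r (k + n) * S.r ^ p)) * LEn S k n G y := by
  induction n with
  | zero =>
    intro p hp F G h x hx y hy hxy
    refine (h x hx y hy hxy).trans ?_
    refine le_mul_of_one_le_left (zero_le) ?_
    rw [ENNReal.one_le_ofReal, Real.one_le_exp_iff]
    exact mul_nonneg (logB_nonneg S _) (pow_nonneg S.hr.1.le _)
  | succ n ih =>
    intro p hp F G h x hx y hy hxy
    show LE1 S (k + n) (LEn S k n F) x ≤ _ * LE1 S (k + n) (LEn S k n G) y
    unfold LE1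
    rw [← ENNReal.tsum_mul_left]
    refine ENNReal.tsum_le_tsum fun a => ?_
    by_cases hz : cons a x ∈ Sig S.W S.A (k + n)
    · have hz' : cons a y ∈ Sig S.W S.A (k + n) := cons_mem_of_head S hz hy (hxy 0 (by omega))
      have hag := agrees_cons hxy a
      have h1 := ih (p + 1) (by omega) F G
        (fun z hz z' hz' ha => h z hz z' hz' (by rwa [show p + 1 + n = p + (n + 1) by omega] at ha))
        _ hz _ hz' hag
      have h2 := holder_two S (k + n) (p + 1) (by omega) _ hz _ hz' hag
      have h3 : gw S (k + n) (cons a x) ≤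
          ENNReal.ofReal (Real.exp (S.κ (k + n) * S.r ^ (p + 1))) * gw S (k + n) (cons a y) := by
        rw [gw_of_mem S hz, gw_of_mem S hz', ← ENNReal.ofReal_mul (Real.exp_pos _).le,
          ← Real.exp_add]
        apply ENNReal.ofReal_le_ofReal
        apply Real.exp_le_exp.2
        linarith [(abs_le.1 h2).2]
      refine (mul_le_mul' h3 h1).trans (le_of_eq ?_)
      have e : logB S.κ S.r (k + (n + 1)) * S.r ^ p =
          S.κ (k + n) * S.r ^ (p + 1) + logB S.κ S.r (k + n) * S.r ^ (p + 1) := by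
        rw [← add_assoc, logB_succ]; ring
      rw [e, Real.exp_add, ENNReal.ofReal_mul (Real.exp_pos _).le]
      ring
    · simp [gw_of_notMem S hz]

theorem dr_agrees {r : ℝ} (hr : 0 < r) {x y : Seq} {p : ℕ} (h1 : r < 1) (h : agrees x y p) :
    dr r x y ≤ r ^ p := by
  unfold dr
  split_ifs with hxy
  · positivity
  · have hne : {i | x i ≠ y i}.Nonempty := by
      by_contra hc
      rw [Set.not_nonempty_iff_eq_empty] at hc
      apply hxy; funext i
      by_contra hi
      exact (Set.eq_empty_iff_forall_notMem.1 hc i) hi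
    refine pow_le_pow_of_le_one hr.le h1.le ?_
    by_contra hlt
    exact (Nat.sInf_mem hne) (h _ (by omega))

theorem dr_cases {r : ℝ} (x y : Seq) :
    x = y ∨ ∃ p, agrees x y p ∧ x p ≠ y p ∧ dr r x y = r ^ p := by
  by_cases hxy : x = y
  · exact Or.inl hxy
  · right
    have hne : {i | x i ≠ y i}.Nonempty := by
      by_contra hc
      rw [Set.not_nonempty_iff_eq_empty] at hc
      apply hxy; funext i
      by_contra hi
      exact (Set.eq_empty_iff_forall_notMem.1 hc i) hi
    refine ⟨sInf {i | x i ≠ y i}, ?_, Nat.sInf_mem hne, by simp [dr, hxy]⟩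
    intro i hi
    by_contra h
    exact (Nat.notMem_of_lt_sInf hi) h

theorem alpha_ge (S : HstarSystem) (k : ℕ) : 1 ≤ S.alphaC k := by
  unfold HstarSystem.alphaC
  rw [le_div_iff₀ S.hβ.1, one_mul]
  have : 1 ≤ Bconst S.κ S.r k := Real.one_le_exp (logB_nonneg S k)
  linarith [S.hβ.2]

theorem alpha_r (S : HstarSystem) (k : ℕ) : S.r ^ S.nseq k * S.alphaC k < 1 := by
  have h := S.hn k
  have ha : 0 < S.alphaC k := lt_of_lt_of_le one_pos (alpha_ge S k)
  have hl : Real.log S.r < 0 := Real.log_neg S.hr.1 S.hr.2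
  have h1 : -Real.log (S.alphaC k) / Real.log S.r < (S.nseq k : ℝ) := by
    have h2 : (⌊-Real.log (S.alphaC k) / Real.log S.r⌋ : ℤ) < (S.nseq k : ℤ) := by
      have : (⌊-Real.log (S.alphaC k) / Real.log S.r⌋ + 1 : ℤ) ≤ (S.nseq k : ℤ) := h
      omega
    exact_mod_cast Int.floor_lt.1 h2
  rw [div_lt_iff_of_neg hl] at h1
  have : Real.log (S.r ^ S.nseq k * S.alphaC k) < 0 := by
    rw [Real.log_mul (pow_pos S.hr.1 _).ne' ha.ne', Real.log_pow]
    linarith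
  exact (Real.log_neg_iff (mul_pos (pow_pos S.hr.1 _) ha)).1 this

/-- Lipschitz and bounded class -/
def Good (S : HstarSystem) (k : ℕ) (D : ℝ) (H : Seq → ℝ≥0∞) : Prop :=
  (∀ z ∈ Sig S.W S.A k, H z ≤ ENNReal.ofReal D) ∧
  ∀ z ∈ Sig S.W S.A k, ∀ z' ∈ Sig S.W S.A k, H z ≤ H z' + ENNReal.ofReal (D * S.dbar k z z')

theorem LEn_le (S : HstarSystem) {k : ℕ} {D : ℝ} {H : Seq → ℝ≥0∞} (hH : Good S k D H) (n : ℕ)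
    {x : Seq} (hx : x ∈ Sig S.W S.A (k + n)) : LEn S k n H x ≤ ENNReal.ofReal D :=
  (LEn_mono S (G := fun _ => ENNReal.ofReal D) hH.1 n x hx).trans (LEn_const S k _ n x hx).le

theorem near (S : HstarSystem) {k : ℕ} {D : ℝ} (hD : 0 ≤ D) {H : Seq → ℝ≥0∞} (hH : Good S k D H)
    (n p : ℕ) (hp : 1 ≤ p) {x y : Seq} (hx : x ∈ Sig S.W S.A (k + n))
    (hy : y ∈ Sig S.W S.A (k + n)) (hxy : agrees x y p) :
    (LEn S k n H x).toReal ≤ Real.exp (logB S.κ S.r (k + n) * S.r ^ p) * (LEn S k n H y).toReal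
      + D * (S.alphaC k * S.r ^ (p + n)) := by
  have ha : 0 ≤ S.alphaC k := zero_le_one.trans (alpha_ge S k)
  have hr0 := S.hr.1
  set δ : ℝ := D * (S.alphaC k * S.r ^ (p + n)) with hδ
  have hδ0 : 0 ≤ δ := by positivity
  have h1 := distortion S k n p hp (fun z => H z - ENNReal.ofReal δ) H
    (fun z hz z' hz' ha => by
      rw [tsub_le_iff_right]
      refine (hH.2 z hz z' hz').trans ?_
      gcongr
      rw [hδ]
      refine mul_le_mul_of_nonneg_left ?_ hD
      refine (min_le_right _ _).trans ?_
      gcongr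
      exact dr_agrees hr0 S.hr.2 ha) x hx y hy hxy
  have h2 : LEn S k n H x ≤ LEn S k n (fun z => H z - ENNReal.ofReal δ) x + ENNReal.ofReal δ := by
    refine (LEn_mono S (G := fun z => (H z - ENNReal.ofReal δ) + ENNReal.ofReal δ)
      (fun z _ => le_tsub_add) n x hx).trans ?_
    rw [LEn_add]
    simp only [LEn_const S k _ n x hx]
    exact le_rfl
  have hyt : LEn S k n H y ≠ ∞ := ne_top_of_le_ne_top ENNReal.ofReal_ne_top (LEn_le S hH n hy)
  have h3 := h2.trans (add_le_add_left h1 _)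
  have h4 := ENNReal.toReal_mono (by finiteness) h3
  rwa [ENNReal.toReal_add (by finiteness) (by finiteness), ENNReal.toReal_mul,
    ENNReal.toReal_ofReal (Real.exp_pos _).le, ENNReal.toReal_ofReal hδ0] at h4

theorem LEn_comp (S : HstarSystem) (k n : ℕ) (F : Seq → ℝ≥0∞) (m : ℕ) :
    LEn S k (n + m) F = LEn S (k + n) m (LEn S k n F) := by
  induction m with
  | zero => rfl
  | succ m ih =>
    show LE1 S (k + (n + m)) (LEn S k (n + m) F) = LE1 S (k + n + m) _
    rw [ih, add_assoc]

theorem far (S : HstarSystem) {k : ℕ} {D : ℝ} (hD : 0 ≤ D) {H : Seq → ℝ≥0∞} (hH : Good S k D H)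
    {x y : Seq} (hx : x ∈ Sig S.W S.A (k + S.lconst k)) (hy : y ∈ Sig S.W S.A (k + S.lconst k)) :
    (LEn S k (S.lconst k) H x).toReal ≤ (LEn S k (S.lconst k) H y).toReal + D * S.sconst k := by
  unfold HstarSystem.lconst at *
  set n := S.nseq k with hn
  set j := k + n with hj
  set m := S.mseq j with hm
  rw [← add_assoc, ← hj] at hx hy
  rw [LEn_comp]
  set F := LEn S k n H with hF
  obtain ⟨hx1, hx2, -⟩ := S.hu j x hx
  obtain ⟨hy1, hy2, -⟩ := S.hu j y hy
  have hCx := S.hC_le j x hx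
  have hCy := S.hC_le j y hy
  rw [← hm] at hx1 hy1 hCx hCy
  set x' := prepend (S.u j x) m x with hx'
  set y' := prepend (S.u j y) m y with hy'
  have hm1 : 1 ≤ m := (S.hm_mem j).1
  have hag : agrees x' y' 1 := by
    intro i hi
    obtain rfl : i = 0 := by omega
    have : 0 < m := by omega
    simp [hx', hy', prepend, this, hx2, hy2]
  have hnear := near S hD hH n 1 le_rfl hx1 hy1 hag
  rw [← hF] at hnear
  have hFle : ∀ z ∈ Sig S.W S.A j, F z ≤ ENNReal.ofReal D := fun z hz => LEn_le S hH n hz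
  have hGF : Good S k D H := hH
  -- lower bound at y
  have lowy : ENNReal.ofReal (S.Cseq j) * F y' ≤ LEn S j m F y := by
    have := LEn_lower S j F hy1 m
    rw [shift_iter_prepend] at this
    exact (mul_le_mul_left (ENNReal.ofReal_le_ofReal hCy) _).trans this
  have lowx : ENNReal.ofReal (S.Cseq j) * (ENNReal.ofReal D - F x') ≤
      LEn S j m (fun z => ENNReal.ofReal D - F z) x := by
    have := LEn_lower S j (fun z => ENNReal.ofReal D - F z) hx1 m
    rw [shift_iter_prepend] at this
    exact (mul_le_mul_left (ENNReal.ofReal_le_ofReal hCx) _).trans this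
  have sumx : LEn S j m F x + LEn S j m (fun z => ENNReal.ofReal D - F z) x ≤ ENNReal.ofReal D := by
    have h1 := congrFun (LEn_add S j F (fun z => ENNReal.ofReal D - F z) m) x
    rw [← h1]
    refine (LEn_mono S (G := fun _ => ENNReal.ofReal D)
      (fun z hz => (add_tsub_cancel_of_le (hFle z hz)).le) m x hx).trans
      (LEn_const S j _ m x hx).le
  have hFx := hFle x' hx1
  have hFy := hFle y' hy1
  have hLx : LEn S j m F x ≤ ENNReal.ofReal D :=
    (LEn_mono S (G := fun _ => ENNReal.ofReal D) hFle m x hx).trans (LEn_const S j _ m x hx).le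
  have hLy : LEn S j m F y ≤ ENNReal.ofReal D :=
    (LEn_mono S (G := fun _ => ENNReal.ofReal D) hFle m y hy).trans (LEn_const S j _ m y hy).le
  have tFx : F x' ≠ ∞ := ne_top_of_le_ne_top ENNReal.ofReal_ne_top hFx
  have tFy : F y' ≠ ∞ := ne_top_of_le_ne_top ENNReal.ofReal_ne_top hFy
  have tLx : LEn S j m F x ≠ ∞ := ne_top_of_le_ne_top ENNReal.ofReal_ne_top hLx
  have tLy : LEn S j m F y ≠ ∞ := ne_top_of_le_ne_top ENNReal.ofReal_ne_top hLy
  have hC := S.hC_pos j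
  have r1 : S.Cseq j * (F y').toReal ≤ (LEn S j m F y).toReal := by
    have := ENNReal.toReal_mono tLy lowy
    rwa [ENNReal.toReal_mul, ENNReal.toReal_ofReal hC.le] at this
  have r2 : (LEn S j m F x).toReal + S.Cseq j * (D - (F x').toReal) ≤ D := by
    have := ENNReal.toReal_mono ENNReal.ofReal_ne_top ((add_le_add_right lowx _).trans sumx)
    rwa [ENNReal.toReal_add (by finiteness) (by finiteness), ENNReal.toReal_mul,
      ENNReal.toReal_sub_of_le hFx ENNReal.ofReal_ne_top,
      ENNReal.toReal_ofReal hC.le, ENNReal.toReal_ofReal hD] at this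
  have r3 : (F x').toReal ≤ D := by
    have := ENNReal.toReal_mono ENNReal.ofReal_ne_top hFx
    rwa [ENNReal.toReal_ofReal hD] at this
  have fy0 : 0 ≤ (F y').toReal := ENNReal.toReal_nonneg
  have hB1 : 1 ≤ Bconst S.κ S.r j := Real.one_le_exp (logB_nonneg S j)
  have ha : 0 < S.alphaC k := lt_of_lt_of_le one_pos (alpha_ge S k)
  have hr0 := S.hr.1
  have hr1 := S.hr.2
  have r4 : (F x').toReal ≤ Bconst S.κ S.r j * (F y').toReal + D * (S.r ^ n * S.alphaC k) := by
    refine hnear.trans (add_le_add ?_ ?_)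
    · refine mul_le_mul_of_nonneg_right ?_ fy0
      apply Real.exp_le_exp.2
      have := logB_nonneg S j
      nlinarith
    · refine mul_le_mul_of_nonneg_left ?_ hD
      rw [mul_comm]
      refine mul_le_mul_of_nonneg_right ?_ ha.le
      exact pow_le_pow_of_le_one hr0.le hr1.le (by omega)
  unfold HstarSystem.sconst
  rw [← hn, ← hj]
  set B := Bconst S.κ S.r j
  set q := S.r ^ n * S.alphaC k
  set X := (F x').toReal
  set Y := (F y').toReal
  set C := S.Cseq j
  have hBp : 0 < B := by linarith
  -- X - Y ≤ D (1 - (1-q)/B)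
  have r5 : X - Y ≤ D * (1 - (1 - q) / B) := by
    have e : (X - D * q) / B ≤ Y := by
      rw [div_le_iff₀ hBp]; linarith
    have e2 : X - (X - D * q) / B ≤ D * (1 - (1 - q) / B) := by
      have : D * (1 - (1 - q) / B) - (X - (X - D * q) / B) = (D - X) * (1 - 1 / B) := by
        field_simp; ring
      have h1B : 1 / B ≤ 1 := by rw [div_le_one hBp]; exact hB1
      have : 0 ≤ (D - X) * (1 - 1 / B) := mul_nonneg (by linarith) (by linarith)
      linarith
    linarith
  have r6 : C * (X - Y) ≤ C * (D * (1 - (1 - q) / B)) := mul_le_mul_of_nonneg_left r5 hC.le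
  have e3 : D * (1 - (1 - q) * C / B) = D - C * D + C * (D * (1 - (1 - q) / B)) := by ring
  rw [e3]
  linarith

theorem dbar_nonneg (S : HstarSystem) (k : ℕ) (x y : Seq) : 0 ≤ S.dbar k x y := by
  refine le_min zero_le_one (mul_nonneg (zero_le_one.trans (alpha_ge S k)) ?_)
  unfold dr
  have := S.hr.1
  split_ifs <;> positivity

theorem contraction (S : HstarSystem) {k : ℕ} {D : ℝ} (hD : 0 ≤ D) {H : Seq → ℝ≥0∞}
    (hH : Good S k D H) {x y : Seq} (hx : x ∈ Sig S.W S.A (k + S.lconst k))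
    (hy : y ∈ Sig S.W S.A (k + S.lconst k)) :
    (LEn S k (S.lconst k) H x).toReal ≤ (LEn S k (S.lconst k) H y).toReal +
      S.tconst k * D * S.dbar (k + S.lconst k) x y := by
  have hr0 := S.hr.1
  have hr1 := S.hr.2
  have hβ0 := S.hβ.1
  have ht0 : 0 ≤ S.tconst k := hβ0.le.trans (le_max_left _ _)
  have hfar := far S hD hH hx hy
  have hst : S.sconst k ≤ S.tconst k := le_max_right _ _
  by_cases h1 : S.dbar (k + S.lconst k) x y = 1
  · rw [h1, mul_one]
    have := mul_le_mul_of_nonneg_left hst hD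
    linarith
  have hdb : S.dbar (k + S.lconst k) x y =
      S.alphaC (k + S.lconst k) * dr S.r x y := by
    rcases min_choice 1 (S.alphaC (k + S.lconst k) * dr S.r x y) with h | h
    · exact absurd h h1
    · exact h
  rcases dr_cases (r := S.r) x y with rfl | ⟨p, hag, -, hdr⟩
  · have := dbar_nonneg S (k + S.lconst k) x x
    have : 0 ≤ S.tconst k * D * S.dbar (k + S.lconst k) x x := by positivity
    linarith
  have hp : 1 ≤ p := by
    by_contra hp
    obtain rfl : p = 0 := by omega
    apply h1
    unfold HstarSystem.dbar
    rw [hdr, pow_zero, mul_one]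
    exact min_eq_left (alpha_ge S _)
  have hnear := near S hD hH _ p hp hx hy hag
  have hXle : (LEn S k (S.lconst k) H x).toReal ≤ D := by
    have := ENNReal.toReal_mono ENNReal.ofReal_ne_top (LEn_le S hH _ hx)
    rwa [ENNReal.toReal_ofReal hD] at this
  rw [hdb, hdr]
  unfold HstarSystem.alphaC at *
  have hq := alpha_r S k
  unfold HstarSystem.alphaC at hq
  set l := S.lconst k with hl
  have hln : S.nseq k ≤ l := by rw [hl]; unfold HstarSystem.lconst; omega
  set X := (LEn S k l H x).toReal
  have hY0 : 0 ≤ (LEn S k l H y).toReal := ENNReal.toReal_nonneg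
  set Y := (LEn S k l H y).toReal
  set E := logB S.κ S.r (k + l) with hE
  have hE0 : 0 ≤ E := logB_nonneg S _
  have hBE : Bconst S.κ S.r (k + l) = Real.exp E := rfl
  rw [hBE]
  set d := S.r ^ p with hd
  have hd0 : 0 < d := by positivity
  have hBk : 0 < Bconst S.κ S.r k := Real.exp_pos _
  set a := Bconst S.κ S.r k / S.β
  have ha : 0 < a := by positivity
  have hδ : D * (a * S.r ^ (p + l)) ≤ D * d := by
    refine mul_le_mul_of_nonneg_left ?_ hD
    rw [pow_add, ← hd]
    have : S.r ^ l ≤ S.r ^ S.nseq k := pow_le_pow_of_le_one hr0.le hr1.le hln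
    have : a * S.r ^ l ≤ 1 := by nlinarith
    calc a * (d * S.r ^ l) = (a * S.r ^ l) * d := by ring
      _ ≤ 1 * d := by gcongr
      _ = d := one_mul d
  have hexp : 1 - E * d ≤ Real.exp (-(E * d)) := by
    have := Real.add_one_le_exp (-(E * d)); linarith
  have hee : Real.exp (-(E * d)) * Real.exp (E * d) = 1 := by
    rw [← Real.exp_add]; simp
  have hb0 := Real.exp_pos (-(E * d))
  have hb1 : Real.exp (-(E * d)) ≤ 1 := Real.exp_le_one_iff.2 (by nlinarith)
  set b := Real.exp (-(E * d))
  set e := Real.exp (E * d)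
  have h5 : b * X ≤ Y + D * d := by
    have : b * X ≤ b * (e * Y + D * d) := mul_le_mul_of_nonneg_left (by linarith) hb0.le
    have h6 : b * (e * Y + D * d) = Y + b * (D * d) := by
      rw [mul_add, ← mul_assoc, hee, one_mul]
    have h7 : b * (D * d) ≤ D * d := mul_le_of_le_one_left (by positivity) hb1
    linarith
  have hX0 : 0 ≤ X := ENNReal.toReal_nonneg
  have h8 : X - b * X ≤ D * (E * d) := by
    have : X - b * X = (1 - b) * X := by ring
    rw [this]
    have : (1 - b) * X ≤ (E * d) * D := mul_le_mul (by linarith) hXle hX0 (by positivity)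
    linarith
  have h9 : E + 1 ≤ Real.exp E := Real.add_one_le_exp E
  have h10 : D * d * (E + 1) ≤ D * d * Real.exp E :=
    mul_le_mul_of_nonneg_left h9 (by positivity)
  have h11 : D * d * Real.exp E ≤ S.tconst k * D * (Real.exp E / S.β * d) := by
    have : S.β ≤ S.tconst k := le_max_left _ _
    have h12 : 1 ≤ S.tconst k / S.β := by rwa [one_le_div hβ0]
    calc D * d * Real.exp E = 1 * (D * d * Real.exp E) := by ring
      _ ≤ S.tconst k / S.β * (D * d * Real.exp E) := by gcongr
      _ = _ := by ring
  linarith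

theorem measurable_cons (a : ℕ) : Measurable (cons a) := by
  refine measurable_pi_iff.2 fun i => ?_
  cases i with
  | zero => exact measurable_const
  | succ i => exact measurable_pi_apply i

theorem measurableSet_Sig (S : HstarSystem) (k : ℕ) : MeasurableSet (Sig S.W S.A k) := by
  have : Sig S.W S.A k = (⋂ i, (fun x : Seq => x i) ⁻¹' (S.W (k + i))) ∩
      ⋂ i, (fun x : Seq => (x i, x (i + 1))) ⁻¹' {q | S.A (k + i) q.1 q.2} := by
    ext x; simp [Sig]
  rw [this]
  refine (MeasurableSet.iInter fun i => ?_).inter (MeasurableSet.iInter fun i => ?_)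
  · exact measurable_pi_apply i (MeasurableSet.of_discrete)
  · exact ((measurable_pi_apply i).prodMk (measurable_pi_apply (i + 1))) (MeasurableSet.of_discrete)

theorem measurable_gw (S : HstarSystem) (k : ℕ) : Measurable (gw S k) := by
  classical
  unfold gw
  refine ENNReal.measurable_ofReal.comp ?_
  rw [← Set.piecewise_eq_indicator]
  refine ContinuousOn.measurable_piecewise ?_ continuousOn_const (measurableSet_Sig S k)
  refine Real.continuous_exp.comp_continuousOn ?_
  intro x hx
  rw [ContinuousWithinAt, Metric.tendsto_nhds]
  intro ε hε
  have hlim : Tendsto (fun n : ℕ => S.κ k * S.r ^ n) atTop (𝓝 0) := by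
    simpa using (tendsto_pow_atTop_nhds_zero_of_lt_one S.hr.1.le S.hr.2).const_mul (S.κ k)
  obtain ⟨n, hn1, hn2⟩ := ((hlim.eventually (gt_mem_nhds hε)).and (eventually_ge_atTop 2)).exists
  have hcyl : PiNat.cylinder x n ∈ 𝓝 x :=
    (PiNat.isOpen_cylinder _ x n).mem_nhds (PiNat.self_mem_cylinder x n)
  filter_upwards [nhdsWithin_le_nhds hcyl, self_mem_nhdsWithin] with y hy hyS
  rw [Real.dist_eq]
  refine (holder_two S k n hn2 y hyS x hx ?_).trans_lt hn1
  exact fun i hi => PiNat.mem_cylinder_iff.1 hy i hi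

theorem measurable_LEn (S : HstarSystem) (k : ℕ) {F : Seq → ℝ≥0∞} (hF : Measurable F) (n : ℕ) :
    Measurable (LEn S k n F) := by
  induction n with
  | zero => exact hF
  | succ n ih =>
    refine Measurable.tsum fun a => ?_
    exact ((measurable_gw S _).comp (measurable_cons a)).mul (ih.comp (measurable_cons a))

theorem lintegral_dual (S : HstarSystem) (k : ℕ) (μ : Measure Seq) {F : Seq → ℝ≥0∞}
    (hF : Measurable F) :
    ∫⁻ x, F x ∂(dualRuelle S.W S.A S.φ k μ) = ∫⁻ x, LE1 S k F x ∂μ := by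
  unfold dualRuelle LE1
  rw [lintegral_sum_measure, lintegral_tsum]
  · congr 1; funext a
    rw [lintegral_map hF (measurable_cons a)]
    exact lintegral_withDensity_eq_lintegral_mul _
      ((measurable_gw S k).comp (measurable_cons a)) (hF.comp (measurable_cons a))
  · intro a
    exact (((measurable_gw S _).comp (measurable_cons a)).mul
      (hF.comp (measurable_cons a))).aemeasurable

theorem lintegral_LEn (S : HstarSystem) (μ : ℕ → Measure Seq)
    (hinv : ∀ k, dualRuelle S.W S.A S.φ k (μ (k + 1)) = μ k) (k : ℕ) {F : Seq → ℝ≥0∞}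
    (hF : Measurable F) (n : ℕ) :
    ∫⁻ x, F x ∂(μ k) = ∫⁻ x, LEn S k n F x ∂(μ (k + n)) := by
  induction n with
  | zero => rfl
  | succ n ih =>
    rw [ih, ← hinv (k + n), lintegral_dual S _ _ (measurable_LEn S k hF n)]
    rfl

theorem iterate_bound (S : HstarSystem) {t : ℝ} (ht : ∀ k, S.tconst k ≤ t)
    (μ ν : ℕ → Measure Seq)
    (hμp : ∀ k, IsProbabilityMeasure (μ k)) (hμs : ∀ k, μ k (Sig S.W S.A k) = 1)
    (hνp : ∀ k, IsProbabilityMeasure (ν k)) (hνs : ∀ k, ν k (Sig S.W S.A k) = 1)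
    (hμinv : ∀ k, dualRuelle S.W S.A S.φ k (μ (k + 1)) = μ k)
    (hνinv : ∀ k, dualRuelle S.W S.A S.φ k (ν (k + 1)) = ν k) (j : ℕ) :
    ∀ (k : ℕ) (D : ℝ), 0 ≤ D → ∀ H : Seq → ℝ≥0∞, Measurable H → Good S k D H →
    ∫⁻ x, H x ∂(μ k) ≤ ∫⁻ x, H x ∂(ν k) + ENNReal.ofReal (t ^ j * D) := by
  have aeμ : ∀ k, ∀ᵐ x ∂(μ k), x ∈ Sig S.W S.A k := fun k =>
    (mem_ae_iff_prob_eq_one (measurableSet_Sig S k)).2 (hμs k)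
  have aeν : ∀ k, ∀ᵐ x ∂(ν k), x ∈ Sig S.W S.A k := fun k =>
    (mem_ae_iff_prob_eq_one (measurableSet_Sig S k)).2 (hνs k)
  induction j with
  | zero =>
    intro k D hD H hHm hH
    refine le_trans ?_ le_add_self
    calc ∫⁻ x, H x ∂(μ k) ≤ ∫⁻ x, ENNReal.ofReal D ∂(μ k) :=
          lintegral_mono_ae ((aeμ k).mono fun x hx => hH.1 x hx)
      _ = _ := by simp
  | succ j ih =>
    intro k D hD H hHm hH
    have ht0 : 0 ≤ t := (S.hβ.1.le.trans (le_max_left _ _)).trans (ht 0)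
    set l := S.lconst k with hl
    rw [lintegral_LEn S μ hμinv k hHm l, lintegral_LEn S ν hνinv k hHm l]
    have hGm := measurable_LEn S k hHm l
    have hlip : ∀ x ∈ Sig S.W S.A (k + l), ∀ y ∈ Sig S.W S.A (k + l),
        LEn S k l H x ≤ LEn S k l H y + ENNReal.ofReal (t * D * S.dbar (k + l) x y) := by
      intro x hx y hy
      have h := contraction S hD hH hx hy
      have hxt : LEn S k l H x ≠ ∞ := ne_top_of_le_ne_top ENNReal.ofReal_ne_top (LEn_le S hH l hx)
      have hyt : LEn S k l H y ≠ ∞ := ne_top_of_le_ne_top ENNReal.ofReal_ne_top (LEn_le S hH l hy)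
      have hdb := dbar_nonneg S (k + l) x y
      have h' : (LEn S k l H x).toReal ≤ (LEn S k l H y).toReal + t * D * S.dbar (k + l) x y := by
        refine h.trans ?_
        gcongr
        exact ht k
      rw [← ENNReal.ofReal_toReal hxt, ← ENNReal.ofReal_toReal hyt,
        ← ENNReal.ofReal_add ENNReal.toReal_nonneg (by positivity)]
      exact ENNReal.ofReal_le_ofReal h'
    set G := LEn S k l H with hG
    set c : ℝ≥0∞ := ⨅ x ∈ Sig S.W S.A (k + l), G x with hc
    have hcle : ∀ x ∈ Sig S.W S.A (k + l), c ≤ G x := fun x hx => iInf₂_le x hx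
    have hgood : Good S (k + l) (t * D) (fun x => G x - c) := by
      refine ⟨fun z hz => ?_, fun z hz z' hz' => ?_⟩
      · rw [tsub_le_iff_left]
        rw [hc, ENNReal.iInf_add]
        refine le_iInf fun y => ?_
        by_cases hy : y ∈ Sig S.W S.A (k + l)
        · simp only [hy, iInf_pos]
          refine (hlip z hz y hy).trans ?_
          refine add_le_add le_rfl (ENNReal.ofReal_le_ofReal ?_)
          have htD : 0 ≤ t * D := by positivity
          exact mul_le_of_le_one_right htD (min_le_left _ _)
        · simp [hy]
      · rw [tsub_le_iff_right, add_right_comm, tsub_add_cancel_of_le (hcle z' hz')]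
        exact hlip z hz z' hz'
    have hm' : Measurable (fun x => G x - c) := hGm.sub measurable_const
    have hb := ih (k + l) (t * D) (by positivity) _ hm' hgood
    have eμ : ∫⁻ x, G x ∂(μ (k + l)) = ∫⁻ x, (G x - c) ∂(μ (k + l)) + c := by
      rw [lintegral_congr_ae (g := fun x => (G x - c) + c)
        ((aeμ (k + l)).mono fun x hx => (tsub_add_cancel_of_le (hcle x hx)).symm),
        lintegral_add_right _ measurable_const]
      simp
    have eν : ∫⁻ x, G x ∂(ν (k + l)) = ∫⁻ x, (G x - c) ∂(ν (k + l)) + c := by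
      rw [lintegral_congr_ae (g := fun x => (G x - c) + c)
        ((aeν (k + l)).mono fun x hx => (tsub_add_cancel_of_le (hcle x hx)).symm),
        lintegral_add_right _ measurable_const]
      simp
    rw [eμ, eν, add_right_comm, show t ^ (j + 1) * D = t ^ j * (t * D) by ring]
    gcongr

theorem cyl_le (S : HstarSystem) {t : ℝ} (ht1 : t < 1) (ht : ∀ k, S.tconst k ≤ t)
    (μ ν : ℕ → Measure Seq)
    (hμp : ∀ k, IsProbabilityMeasure (μ k)) (hμs : ∀ k, μ k (Sig S.W S.A k) = 1)
    (hνp : ∀ k, IsProbabilityMeasure (ν k)) (hνs : ∀ k, ν k (Sig S.W S.A k) = 1)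
    (hμinv : ∀ k, dualRuelle S.W S.A S.φ k (μ (k + 1)) = μ k)
    (hνinv : ∀ k, dualRuelle S.W S.A S.φ k (ν (k + 1)) = ν k) (k : ℕ) (w : Seq) (p : ℕ) :
    μ k (PiNat.cylinder w p) ≤ ν k (PiNat.cylinder w p) := by
  have hr0 := S.hr.1
  have hr1 := S.hr.2
  have ht0 : 0 ≤ t := (S.hβ.1.le.trans (le_max_left _ _)).trans (ht 0)
  have hms : MeasurableSet (PiNat.cylinder w p : Set Seq) :=
    (PiNat.isOpen_cylinder _ w p).measurableSet
  set D : ℝ := (S.r ^ p)⁻¹ with hD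
  have hrp : 0 < S.r ^ p := by positivity
  have hrp1 : S.r ^ p ≤ 1 := pow_le_one₀ hr0.le hr1.le
  have hD1 : 1 ≤ D := (one_le_inv₀ hrp).2 hrp1
  have hgood : Good S k D ((PiNat.cylinder w p : Set Seq).indicator 1) := by
    refine ⟨fun z _ => ?_, fun z _ z' _ => ?_⟩
    · refine (Set.indicator_le_self' (fun _ _ => zero_le) z).trans ?_
      simpa using hD1
    · by_cases hz : z ∈ (PiNat.cylinder w p : Set Seq)
      swap
      · simp [hz]
      by_cases hz' : z' ∈ (PiNat.cylinder w p : Set Seq)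
      · simp [hz, hz']
      simp only [hz, hz', Set.indicator_of_mem, Set.indicator_of_notMem, not_false_eq_true,
        Pi.one_apply, zero_add, ENNReal.one_le_ofReal]
      rcases dr_cases (r := S.r) z z' with rfl | ⟨q, hag, -, hdr⟩
      · exact absurd hz hz'
      have hqp : q < p := by
        by_contra hqp
        apply hz'
        rw [PiNat.mem_cylinder_iff] at hz ⊢
        intro i hi
        rw [← hag i (by omega)]; exact hz i hi
      have hdb : S.r ^ p ≤ S.dbar k z z' := by
        unfold HstarSystem.dbar
        rw [hdr]
        refine le_min hrp1 ?_
        have h1 : S.r ^ p ≤ S.r ^ q := pow_le_pow_of_le_one hr0.le hr1.le hqp.le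
        exact h1.trans (le_mul_of_one_le_left (by positivity) (alpha_ge S k))
      calc (1 : ℝ) = D * S.r ^ p := by rw [hD]; field_simp
        _ ≤ D * S.dbar k z z' := by gcongr
  have hb : ∀ j : ℕ, μ k (PiNat.cylinder w p) ≤
      ν k (PiNat.cylinder w p) + ENNReal.ofReal (t ^ j * D) := by
    intro j
    have := iterate_bound S ht μ ν hμp hμs hνp hνs hμinv hνinv j k D (by positivity) _
      (measurable_one.indicator hms) hgood
    simpa [lintegral_indicator_one hms] using this
  have hlim : Tendsto (fun j : ℕ => ν k (PiNat.cylinder w p) + ENNReal.ofReal (t ^ j * D)) atTop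
      (𝓝 (ν k (PiNat.cylinder w p) + ENNReal.ofReal (0 * D))) :=
    (ENNReal.tendsto_ofReal
      ((tendsto_pow_atTop_nhds_zero_of_lt_one ht0 ht1).mul_const D)).const_add _
  have := ge_of_tendsto' hlim hb
  simpa using this

theorem ext_cyl (μ ν : Measure Seq) [IsProbabilityMeasure μ] [IsProbabilityMeasure ν]
    (h : ∀ w p, μ (PiNat.cylinder w p) = ν (PiNat.cylinder w p)) : μ = ν := by
  have hgen := (PiNat.isTopologicalBasis_cylinders (fun _ : ℕ => ℕ)).borel_eq_generateFrom
  refine ext_of_generate_finite _ (BorelSpace.measurable_eq.trans hgen) ?_ ?_ (by simp)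
  · rintro _ ⟨x, n, rfl⟩ _ ⟨y, m, rfl⟩ ⟨z, hz1, hz2⟩
    refine ⟨z, max n m, ?_⟩
    rw [PiNat.mem_cylinder_iff] at hz1 hz2
    ext q
    simp only [Set.mem_inter_iff, PiNat.mem_cylinder_iff, lt_max_iff]
    constructor
    · rintro ⟨h1, h2⟩ i (hi | hi)
      · rw [h1 i hi, hz1 i hi]
      · rw [h2 i hi, hz2 i hi]
    · intro h
      exact ⟨fun i hi => by rw [h i (Or.inl hi), hz1 i hi],
        fun i hi => by rw [h i (Or.inr hi), hz2 i hi]⟩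
  · rintro _ ⟨x, n, rfl⟩
    exact h x n

end Helpers

/-- (Corollary, uniqueness.) Under property `(H*)`, if the `n_k` are chosen so
that `sup_k t_k < 1`, then an invariant sequence of Borel probability measures
(`ℒ^*_k(μ_{k+1}) = μ_k` for all `k`) is unique. -/
theorem invariant_sequence_unique (S : HstarSystem)
    (ht : ∃ t : ℝ, t < 1 ∧ ∀ k, S.tconst k ≤ t)
    (μ ν : ℕ → Measure Seq)
    (hμp : ∀ k, IsProbabilityMeasure (μ k)) (hμs : ∀ k, μ k (Sig S.W S.A k) = 1)
    (hνp : ∀ k, IsProbabilityMeasure (ν k)) (hνs : ∀ k, ν k (Sig S.W S.A k) = 1)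
    (hμinv : ∀ k, dualRuelle S.W S.A S.φ k (μ (k + 1)) = μ k)
    (hνinv : ∀ k, dualRuelle S.W S.A S.φ k (ν (k + 1)) = ν k) :
    ∀ k, μ k = ν k := by
  obtain ⟨t, ht1, ht⟩ := ht
  intro k
  have := hμp k
  have := hνp k
  refine ext_cyl _ _ fun w p => le_antisymm ?_ ?_
  · exact cyl_le S ht1 ht μ ν hμp hμs hνp hνs hμinv hνinv k w p
  · exact cyl_le S ht1 ht ν μ hνp hνs hμp hμs hνinv hμinv k w p

end NSShift
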